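/- arXiv:1605.00974 — 2 statements merged into one kernel-verified Lean document; each statement's English description precedes it below -/
import Mathlib

section
/- Rankine–Hugoniot relation for discrete shock waves: let W ∈ C¹(ℝ) and suppose X_j(t) = φ(j − ct), j ∈ ℤ, t ≥ 0, is a discrete shock wave of the Newton chain on ℤ associated with (u_l, u_r), u_l ≠ u_r: φ ∈ C²(ℝ), c ∈ ℝ, c²φ''(x) = W'(φ(x+1) − φ(x)) − W'(φ(x) − φ(x−1)) for all x ∈ ℝ, φ'(x) → u_l as x → −∞ and φ'(x) → u_r as x → +∞. Then c²·(u_r − u_l) = W'(u_r) − W'(u_l). -/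
open Filter

/-!
Write the travelling-wave equation as `v' x = g x - g (x - 1)`, where `v = c² φ'` and
`g x = W' (φ (x + 1) - φ x)` is the force in a bond. Integrating, `v` differs by a constant from
the moving window integral `x ↦ ∫ t in x - 1..x, g t`. A window integral of a function with a
limit at `±∞` tends to the window length times that limit. For `φ'` this gives
`φ (x + 1) - φ x → u`, hence `g → W' u`, at the end of the line where `φ' → u`; for `g` it evaluates
the constant at both ends, and the two values agree.
-/

open Topology MeasureTheory

section MovingWindow

variable {E : Type*} [NormedAddCommGroup E] [NormedSpace ℝ E] [CompleteSpace E]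
  {l : Filter ℝ} [TendstoIxxClass Set.Icc l l]

lemma integral_sub_smul_isLittleO {ι : Type*} {m : Filter ι} {u v : ι → ℝ} {g : ℝ → E} {L : E}
    (hg : Continuous g) (hL : Tendsto g l (𝓝 L)) (hu : Tendsto u m l) (hv : Tendsto v m l) :
    (fun i ↦ (∫ t in u i..v i, g t) - (v i - u i) • L) =o[m] fun i ↦ v i - u i := by
  refine Asymptotics.isLittleO_iff.2 fun ε hε ↦ ?_
  have h_near : ∀ᶠ t in l, ‖g t - L‖ ≤ ε := by
    simpa only [dist_eq_norm] using hL.eventually (Metric.closedBall_mem_nhds L hε)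
  filter_upwards [(hu.uIcc hv).eventually h_near.smallSets] with i hi
  calc ‖(∫ t in u i..v i, g t) - (v i - u i) • L‖
      = ‖∫ t in u i..v i, (g t - L)‖ := by
        rw [intervalIntegral.integral_sub (hg.intervalIntegrable _ _) intervalIntegrable_const,
          intervalIntegral.integral_const]
    _ ≤ ε * ‖v i - u i‖ :=
        intervalIntegral.norm_integral_le_of_norm_le_const fun t ht ↦
          hi t (Set.uIoc_subset_uIcc ht)

lemma tendsto_integral_window {g : ℝ → E} {L : E} (hg : Continuous g)
    (hshift : ∀ s, Tendsto (· + s) l l) (hL : Tendsto g l (𝓝 L)) (a b : ℝ) :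
    Tendsto (fun x ↦ ∫ t in (x + a)..(x + b), g t) l (𝓝 ((b - a) • L)) := by
  have h_littleO := integral_sub_smul_isLittleO hg hL (hshift a) (hshift b)
  simp only [add_sub_add_left_eq_sub] at h_littleO
  have h_zero := (Asymptotics.isLittleO_one_iff ℝ).1
    (h_littleO.trans_isBigO (Asymptotics.isBigO_const_const (b - a) one_ne_zero l))
  exact tendsto_sub_nhds_zero_iff.1 h_zero

lemma tendsto_increment_of_tendsto_deriv {φ : ℝ → E} {L : E} (hφ : ContDiff ℝ 1 φ)
    (hshift : ∀ s, Tendsto (· + s) l l) (hL : Tendsto (deriv φ) l (𝓝 L)) (a b : ℝ) :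
    Tendsto (fun x ↦ φ (x + b) - φ (x + a)) l (𝓝 ((b - a) • L)) := by
  have hφ' : Continuous (deriv φ) := hφ.continuous_deriv_one
  refine (tendsto_integral_window hφ' hshift hL a b).congr fun x ↦ ?_
  exact intervalIntegral.integral_deriv_eq_sub
    (fun y _ ↦ hφ.differentiable one_ne_zero y) (hφ'.intervalIntegrable _ _)

end MovingWindow

section DifferenceFlux

variable {E : Type*} [NormedAddCommGroup E] [NormedSpace ℝ E] [CompleteSpace E]
  {v g : ℝ → E} {a b : ℝ}

lemma sub_eq_integral_window_sub_of_hasDerivAt (hg : Continuous g)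
    (hv : ∀ x, HasDerivAt v (g (x + b) - g (x + a)) x) (x y : ℝ) :
    v y - v x = (∫ t in (y + a)..(y + b), g t) - ∫ t in (x + a)..(x + b), g t := by
  have hint (p q : ℝ) : IntervalIntegrable g volume p q := hg.intervalIntegrable p q
  have hint_shift (s : ℝ) : IntervalIntegrable (fun t ↦ g (t + s)) volume x y :=
    (hg.comp (continuous_add_const s)).intervalIntegrable x y
  calc v y - v x
      = ∫ t in x..y, (g (t + b) - g (t + a)) :=
        (intervalIntegral.integral_eq_sub_of_hasDerivAt (fun t _ ↦ hv t)
          ((hint_shift b).sub (hint_shift a))).symm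
    _ = (∫ t in (x + b)..(y + b), g t) - ∫ t in (x + a)..(y + a), g t := by
        rw [intervalIntegral.integral_sub (hint_shift b) (hint_shift a),
          intervalIntegral.integral_comp_add_right, intervalIntegral.integral_comp_add_right]
    _ = (∫ t in (y + a)..(y + b), g t) - ∫ t in (x + a)..(x + b), g t :=
        intervalIntegral.integral_interval_sub_interval_comm' (hint _ _) (hint _ _) (hint _ _)

lemma jump_eq_smul_jump_of_hasDerivAt_sub {vl vr gl gr : E} (hg : Continuous g)
    (hv : ∀ x, HasDerivAt v (g (x + b) - g (x + a)) x)
    (hvl : Tendsto v atBot (𝓝 vl)) (hvr : Tendsto v atTop (𝓝 vr))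
    (hgl : Tendsto g atBot (𝓝 gl)) (hgr : Tendsto g atTop (𝓝 gr)) :
    vr - vl = (b - a) • (gr - gl) := by
  have hwl := tendsto_integral_window hg
    (fun s ↦ tendsto_atBot_add_const_right _ s tendsto_id) hgl a b
  have hwr := tendsto_integral_window hg
    (fun s ↦ tendsto_atTop_add_const_right _ s tendsto_id) hgr a b
  have h_jump_v : Tendsto (fun p : ℝ × ℝ ↦ v p.2 - v p.1) (atBot ×ˢ atTop) (𝓝 (vr - vl)) :=
    (hvr.comp tendsto_snd).sub (hvl.comp tendsto_fst)
  have h_jump_window := (hwr.comp tendsto_snd).sub (hwl.comp (tendsto_fst (g := atTop (α := ℝ))))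
  rw [smul_sub]
  exact tendsto_nhds_unique h_jump_v (h_jump_window.congr fun p ↦
    (sub_eq_integral_window_sub_of_hasDerivAt hg hv p.1 p.2).symm)

end DifferenceFlux

theorem rankine_hugoniot_discrete_shock_general
    {E : Type*} [NormedAddCommGroup E] [NormedSpace ℝ E] [CompleteSpace E]
    {f : E → E} (hf : Continuous f) {ul ur : E} {k : ℝ} {φ : ℝ → E} (hφ : ContDiff ℝ 2 φ)
    (heq : ∀ x, k • deriv (deriv φ) x = f (φ (x + 1) - φ x) - f (φ x - φ (x - 1)))
    (hl : Tendsto (deriv φ) atBot (𝓝 ul)) (hr : Tendsto (deriv φ) atTop (𝓝 ur)) :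
    k • (ur - ul) = f ur - f ul := by
  let g : ℝ → E := fun x ↦ f (φ (x + 1) - φ x)
  have hg : Continuous g := by
    have := hφ.continuous
    fun_prop
  have hv (x : ℝ) : HasDerivAt (k • deriv φ) (g (x + 0) - g (x + -1)) x := by
    have hφ'' := (hφ.differentiable_deriv_two x).hasDerivAt.const_smul k
    simpa [g, heq, ← sub_eq_add_neg] using hφ''
  have tendsto_force {l : Filter ℝ} [TendstoIxxClass Set.Icc l l] {u : E}
      (hshift : ∀ s, Tendsto (· + s) l l) (hu : Tendsto (deriv φ) l (𝓝 u)) :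
      Tendsto g l (𝓝 (f u)) := by
    have h_bond := tendsto_increment_of_tendsto_deriv (hφ.of_le one_le_two) hshift hu 0 1
    simp only [add_zero, sub_zero, one_smul] at h_bond
    exact (hf.tendsto u).comp h_bond
  have hgl := tendsto_force (fun s ↦ tendsto_atBot_add_const_right _ s tendsto_id) hl
  have hgr := tendsto_force (fun s ↦ tendsto_atTop_add_const_right _ s tendsto_id) hr
  simpa [smul_sub] using
    jump_eq_smul_jump_of_hasDerivAt_sub hg hv (hl.const_smul k) (hr.const_smul k) hgl hgr

/-- **Rankine–Hugoniot relation for discrete shock waves.**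
If `X_j(t) = φ(j − ct)` is a discrete shock wave of the Newton chain on `ℤ`
associated with `(u_l, u_r)`, `u_l ≠ u_r`, then `c²(u_r − u_l) = W'(u_r) − W'(u_l)`. -/
theorem rankine_hugoniot_discrete_shock
    (W : ℝ → ℝ) (hW : ContDiff ℝ 1 W)
    (ul ur c : ℝ) (hne : ul ≠ ur)
    (φ : ℝ → ℝ) (hφ : ContDiff ℝ 2 φ)
    (heq : ∀ x : ℝ, c ^ 2 * deriv (deriv φ) x
      = deriv W (φ (x + 1) - φ x) - deriv W (φ x - φ (x - 1)))
    (hl : Tendsto (deriv φ) atBot (nhds ul))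
    (hr : Tendsto (deriv φ) atTop (nhds ur)) :
    c ^ 2 * (ur - ul) = deriv W ur - deriv W ul :=
  rankine_hugoniot_discrete_shock_general hW.continuous_deriv_one hφ heq hl hr
end

section
/- Non-existence of stationary discrete shock waves: let W ∈ C¹(ℝ) and let u_l, u_r ∈ ℝ with W'(u_l) ≠ W'(u_r). Then there is no discrete shock wave of the Newton chain on ℤ associated with (u_l, u_r) having speed c = 0; i.e., there is no φ ∈ C²(ℝ) with 0 = W'(φ(x+1) − φ(x)) − W'(φ(x) − φ(x−1)) for all x ∈ ℝ, φ'(x) → u_l as x → −∞, and φ'(x) → u_r as x → +∞. -/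
open Filter

/-!
At speed `0` the travelling wave equation says that the force `W'(φ (x + 1) - φ x)` is `1`-periodic
in `x`. By the mean value inequality the discrete strain `φ (x + 1) - φ x` has the same limits at
`±∞` as `φ'`, so the force tends to `W'(u_l)` and `W'(u_r)`. A periodic function with limits at
both ends has the same limit at both, which forces `W'(u_l) = W'(u_r)`.
-/

section MeanValue

open Asymptotics

variable {ι E : Type*} [NormedAddCommGroup E] [NormedSpace ℝ E]
  {φ : ℝ → E} {u : E} {l : Filter ℝ} [TendstoIxxClass Set.Icc l l]

theorem isLittleO_sub_of_tendsto_deriv {k : Filter ι} {a b : ι → ℝ}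
    (hφ : ∀ᶠ x in l, DifferentiableAt ℝ φ x) (hu : Tendsto (deriv φ) l (nhds u))
    (ha : Tendsto a k l) (hb : Tendsto b k l) :
    (fun i => φ (b i) - φ (a i) - (b i - a i) • u) =o[k] fun i => b i - a i := by
  refine isLittleO_iff.2 fun ε hε => ?_
  have deriv_near_u : ∀ᶠ x in l, DifferentiableAt ℝ φ x ∧ ‖deriv φ x - u‖ < ε :=
    hφ.and ((tendsto_iff_norm_sub_tendsto_zero.1 hu).eventually_lt_const hε)
  filter_upwards [(ha.uIcc hb).eventually deriv_near_u.smallSets] with i hi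
  have hasDerivWithinAt_sub_smul : ∀ x ∈ Set.uIcc (a i) (b i),
      HasDerivWithinAt (fun y => φ y - y • u) (deriv φ x - u) (Set.uIcc (a i) (b i)) x :=
    fun x hx => by
      simpa only [one_smul] using
        ((hi x hx).1.hasDerivAt.fun_sub ((hasDerivAt_id' x).smul_const u)).hasDerivWithinAt
  calc ‖φ (b i) - φ (a i) - (b i - a i) • u‖
      = ‖(φ (b i) - b i • u) - (φ (a i) - a i • u)‖ := by congr 1; module
    _ ≤ ε * ‖b i - a i‖ :=
      (convex_uIcc _ _).norm_image_sub_le_of_norm_hasDerivWithin_le hasDerivWithinAt_sub_smul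
        (fun x hx => (hi x hx).2.le) Set.left_mem_uIcc Set.right_mem_uIcc

theorem tendsto_add_sub_of_tendsto_deriv {h : ℝ} (hφ : ∀ᶠ x in l, DifferentiableAt ℝ φ x)
    (hu : Tendsto (deriv φ) l (nhds u)) (hl : Tendsto (· + h) l l) :
    Tendsto (fun x => φ (x + h) - φ x) l (nhds (h • u)) := by
  have hsub := isLittleO_sub_of_tendsto_deriv hφ hu tendsto_id hl
  simp only [id, add_sub_cancel_left] at hsub
  exact tendsto_sub_nhds_zero_iff.1 <|
    (isLittleO_one_iff ℝ).1 (hsub.trans_isBigO (isBigO_const_const h one_ne_zero l))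

end MeanValue

theorem eq_of_periodic_of_tendsto_atBot_of_tendsto_atTop {G Y : Type*} [AddCommGroup G]
    [LinearOrder G] [IsOrderedAddMonoid G] [Archimedean G] [TopologicalSpace Y] [T2Space Y]
    {f : G → Y} {c : G} {a b : Y} (hf : Function.Periodic f c) (hc : 0 < c)
    (ha : Tendsto f atBot (nhds a)) (hb : Tendsto f atTop (nhds b)) : a = b := by
  have nsmul_atTop : Tendsto (fun n : ℕ => n • c) atTop atTop :=
    tendsto_id.atTop_nsmul_const hc
  have hfa : Tendsto (fun _ : ℕ => f 0) atTop (nhds a) := by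
    simpa only [Function.comp_def, (hf.nsmul _).neg.eq] using
      ha.comp (tendsto_neg_atTop_atBot.comp nsmul_atTop)
  have hfb : Tendsto (fun _ : ℕ => f 0) atTop (nhds b) := by
    simpa only [Function.comp_def, (hf.nsmul _).eq] using hb.comp nsmul_atTop
  exact tendsto_nhds_unique hfa hfb

theorem no_stationary_discrete_shock_general {E Y : Type*} [NormedAddCommGroup E]
    [NormedSpace ℝ E] [TopologicalSpace Y] [T2Space Y] {force : E → Y} {ul ur : E}
    (hl : ContinuousAt force ul) (hr : ContinuousAt force ur) (hne : force ul ≠ force ur) :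
    ¬ ∃ φ : ℝ → E, Differentiable ℝ φ ∧
      (∀ x : ℝ, force (φ (x + 1) - φ x) = force (φ x - φ (x - 1))) ∧
      Tendsto (deriv φ) atBot (nhds ul) ∧ Tendsto (deriv φ) atTop (nhds ur) := by
  rintro ⟨φ, hφ, heq, hbot, htop⟩
  have force_periodic : Function.Periodic (fun x => force (φ (x + 1) - φ x)) 1 := fun x => by
    simpa only [add_sub_cancel_right] using heq (x + 1)
  have strain_atBot : Tendsto (fun x => φ (x + 1) - φ x) atBot (nhds ul) := by
    simpa only [one_smul] using tendsto_add_sub_of_tendsto_deriv (.of_forall hφ) hbot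
      (tendsto_atBot_add_const_right _ 1 tendsto_id)
  have strain_atTop : Tendsto (fun x => φ (x + 1) - φ x) atTop (nhds ur) := by
    simpa only [one_smul] using tendsto_add_sub_of_tendsto_deriv (.of_forall hφ) htop
      (tendsto_atTop_add_const_right _ 1 tendsto_id)
  exact hne <| eq_of_periodic_of_tendsto_atBot_of_tendsto_atTop force_periodic one_pos
    (hl.tendsto.comp strain_atBot) (hr.tendsto.comp strain_atTop)

/-- **Non-existence of stationary discrete shock waves.**
If `W ∈ C¹(ℝ)` and `W'(u_l) ≠ W'(u_r)`, there is no discrete shock wave of the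
Newton chain on `ℤ` associated with `(u_l, u_r)` with speed `c = 0`. -/
theorem no_stationary_discrete_shock
    (W : ℝ → ℝ) (hW : ContDiff ℝ 1 W)
    (ul ur : ℝ) (hne : deriv W ul ≠ deriv W ur) :
    ¬ ∃ φ : ℝ → ℝ, ContDiff ℝ 2 φ ∧
      (∀ x : ℝ, (0 : ℝ) = deriv W (φ (x + 1) - φ x) - deriv W (φ x - φ (x - 1))) ∧
      Tendsto (deriv φ) atBot (nhds ul) ∧ Tendsto (deriv φ) atTop (nhds ur) := by
  rintro ⟨φ, hφ, heq, hlim⟩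
  have hW' : Continuous (deriv W) := hW.continuous_deriv le_rfl
  exact no_stationary_discrete_shock_general hW'.continuousAt hW'.continuousAt hne
    ⟨φ, hφ.differentiable two_ne_zero, fun x => sub_eq_zero.1 (heq x).symm, hlim⟩
end
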